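/- arXiv:2308.10153 — 3 statements merged into one kernel-verified Lean document; each statement's English description precedes it below -/
import Mathlib

section
/- With the circuit-cutting setup below, the full state decomposes over the Pauli strings on the cut register as: ρ = 2^{-K} · Σ_{f : Fin K → Fin 4} ρ₁(S_f) ⊗ ρ₂(S_f), where the left-hand side is reindexed so that both sides are matrices indexed by A × (C × B). -/
open Matrix BigOperators Kronecker

/-- A register of `n` qubits: length-`n` bitstrings. -/
abbrev Reg (n : ℕ) := Fin n → Fin 2

/-- The four Pauli matrices `I, X, Y, Z` as `2 × 2` complex matrices. -/
noncomputable def pauli : Fin 4 → Matrix (Fin 2) (Fin 2) ℂ :=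
  ![!![1, 0; 0, 1], !![0, 1; 1, 0], !![0, -Complex.I; Complex.I, 0], !![1, 0; 0, -1]]

/-- The Pauli string `S_f`: the `K`-fold Kronecker product of the matrices `σ_{f k}`. -/
noncomputable def pauliString {K : ℕ} (f : Fin K → Fin 4) :
    Matrix (Reg K) (Reg K) ℂ :=
  Matrix.of fun b b' => ∏ k, pauli (f k) (b k) (b' k)

/-- The projector `|0⟩⟨0|` onto the all-zeros state of a register. -/
noncomputable def zeroProj (α : Type*) [Zero α] [DecidableEq α] : Matrix α α ℂ :=
  Matrix.of fun a a' => if a = 0 ∧ a' = 0 then 1 else 0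

/-- Upstream fragment data `ρ₁(M)`: the partial trace over the cut register `C` of
`(1_A ⊗ M) · U₁|0⟩⟨0|U₁ᴴ`. -/
noncomputable def rho1 {n₁ K : ℕ}
    (U₁ : Matrix (Reg n₁ × Reg K) (Reg n₁ × Reg K) ℂ)
    (M : Matrix (Reg K) (Reg K) ℂ) : Matrix (Reg n₁) (Reg n₁) ℂ :=
  Matrix.of fun a a' => ∑ c, ∑ c',
    M c' c * (U₁ * zeroProj (Reg n₁ × Reg K) * U₁ᴴ) (a, c) (a', c')

/-- Downstream fragment data `ρ₂(M) = U₂ (M ⊗ |0⟩⟨0|_B) U₂ᴴ`. -/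
noncomputable def rho2 {K n₂ : ℕ}
    (U₂ : Matrix (Reg K × Reg n₂) (Reg K × Reg n₂) ℂ)
    (M : Matrix (Reg K) (Reg K) ℂ) : Matrix (Reg K × Reg n₂) (Reg K × Reg n₂) ℂ :=
  U₂ * (M ⊗ₖ zeroProj (Reg n₂)) * U₂ᴴ

/-- The full state
`ρ = (1_A ⊗ U₂)(U₁ ⊗ 1_B)|0⟩⟨0|(U₁ ⊗ 1_B)ᴴ(1_A ⊗ U₂)ᴴ`, indexed by `A × (C × B)`
(with `U₁ ⊗ 1_B` reindexed along `(A × C) × B ≃ A × (C × B)`). -/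
noncomputable def fullState {n₁ K n₂ : ℕ}
    (U₁ : Matrix (Reg n₁ × Reg K) (Reg n₁ × Reg K) ℂ)
    (U₂ : Matrix (Reg K × Reg n₂) (Reg K × Reg n₂) ℂ) :
    Matrix (Reg n₁ × (Reg K × Reg n₂)) (Reg n₁ × (Reg K × Reg n₂)) ℂ :=
  let V : Matrix (Reg n₁ × (Reg K × Reg n₂)) (Reg n₁ × (Reg K × Reg n₂)) ℂ :=
    Matrix.reindex (Equiv.prodAssoc _ _ _) (Equiv.prodAssoc _ _ _)
      (U₁ ⊗ₖ (1 : Matrix (Reg n₂) (Reg n₂) ℂ))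
  ((1 : Matrix (Reg n₁) (Reg n₁) ℂ) ⊗ₖ U₂) * V *
    zeroProj (Reg n₁ × (Reg K × Reg n₂)) * Vᴴ *
    ((1 : Matrix (Reg n₁) (Reg n₁) ℂ) ⊗ₖ U₂)ᴴ

/-!
The Pauli strings satisfy `∑ f, (S_f)_{c',c} S_f = 2 ^ K E_{c,c'}`, site by site. Pairing them with
the upstream state `σ = U₁|0⟩⟨0|U₁ᴴ` therefore recovers `σ = 2^{-K} ∑ f, Tr_C((1 ⊗ S_f) σ) ⊗ S_f`.
The downstream circuit, which adjoins `|0⟩⟨0|` on `B` and conjugates by `1 ⊗ U₂`, is a linear map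
sending `σ` to the full state and each `N ⊗ M` to `N ⊗ ρ₂(M)`, so applying it to this expansion
gives the decomposition.
-/

section PauliCompleteness

theorem sum_pauli_apply_smul_pauli (a b : Fin 2) :
    ∑ i, pauli i a b • pauli i = (2 : ℂ) • single b a 1 := by
  ext c d
  fin_cases a <;> fin_cases b <;> fin_cases c <;> fin_cases d <;>
    simp [pauli, Fin.sum_univ_four, one_add_one_eq_two]

theorem sum_pauliString_apply_smul_pauliString {K : ℕ} (a b : Reg K) :
    ∑ f : Fin K → Fin 4, pauliString f a b • pauliString f = (2 : ℂ) ^ K • single b a 1 := by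
  ext c d
  have site (k : Fin K) : ∑ i, pauli i (a k) (b k) * pauli i (c k) (d k) =
      if b k = c k ∧ a k = d k then 2 else 0 := by
    simpa [Matrix.sum_apply, single_apply] using
      congr_fun₂ (sum_pauli_apply_smul_pauli (a k) (b k)) (c k) (d k)
  calc (∑ f : Fin K → Fin 4, pauliString f a b • pauliString f) c d
      = ∑ f : Fin K → Fin 4, ∏ k, pauli (f k) (a k) (b k) * pauli (f k) (c k) (d k) := by
        simp [Matrix.sum_apply, pauliString, Finset.prod_mul_distrib]
    _ = ∏ k, ∑ i, pauli i (a k) (b k) * pauli i (c k) (d k) :=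
        (Fintype.prod_sum fun k i => pauli i (a k) (b k) * pauli i (c k) (d k)).symm
    _ = if b = c ∧ a = d then 2 ^ K else 0 := by
        simp [site, Finset.prod_ite_zero, funext_iff, forall_and]
    _ = ((2 : ℂ) ^ K • single b a 1) c d := by
        simp [single_apply]

end PauliCompleteness

section WeightedPartialTrace

variable {α γ ι R : Type*} [Fintype γ] [CommSemiring R]

/-- The partial trace over `γ` of `(1 ⊗ M) * σ`, written out in entries: `rho1 U₁` is by
definition the case `σ = U₁|0⟩⟨0|U₁ᴴ`. -/
def weightedPartialTrace (σ : Matrix (α × γ) (α × γ) R) (M : Matrix γ γ R) : Matrix α α R :=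
  of fun a a' => ∑ c, ∑ c', M c' c * σ (a, c) (a', c')

theorem sum_weightedPartialTrace_kronecker [Fintype ι] [DecidableEq γ] {S : ι → Matrix γ γ R}
    {κ : R} (hS : ∀ a b, ∑ i, S i a b • S i = κ • single b a 1)
    (σ : Matrix (α × γ) (α × γ) R) :
    ∑ i, weightedPartialTrace σ (S i) ⊗ₖ S i = κ • σ := by
  ext ⟨a, d⟩ ⟨a', d'⟩
  have completeness (c c' : γ) :
      ∑ i, S i c' c * S i d d' = if c = d ∧ c' = d' then κ else 0 := by
    simpa [Matrix.sum_apply, single_apply] using congr_fun₂ (hS c' c) d d'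
  calc (∑ i, weightedPartialTrace σ (S i) ⊗ₖ S i) (a, d) (a', d')
      = ∑ i, ∑ c, ∑ c', (S i c' c * S i d d') * σ (a, c) (a', c') := by
        simp only [Matrix.sum_apply, kroneckerMap_apply, weightedPartialTrace, of_apply,
          Finset.sum_mul, mul_right_comm]
    _ = ∑ c, ∑ c', (∑ i, S i c' c * S i d d') * σ (a, c) (a', c') := by
        simp only [Finset.sum_mul]
        rw [Finset.sum_comm]
        exact Finset.sum_congr rfl fun c _ => Finset.sum_comm
    _ = (κ • σ) (a, d) (a', d') := by
        simp [completeness, ite_and]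

end WeightedPartialTrace

section DownstreamMap

variable {α β γ δ R : Type*} [Fintype α] [Fintype β] [Fintype γ] [DecidableEq α]
  [CommSemiring R] [StarRing R]

/-- The downstream circuit acting on a state `σ` of `α × γ`: adjoin an ancilla on `β` in state `P`,
then conjugate by `1 ⊗ U`. -/
def downstreamMap (U : Matrix δ (γ × β) R) (P : Matrix β β R) :
    Matrix (α × γ) (α × γ) R →ₗ[R] Matrix (α × δ) (α × δ) R where
  toFun σ := ((1 : Matrix α α R) ⊗ₖ U) *
    reindex (Equiv.prodAssoc α γ β) (Equiv.prodAssoc α γ β) (σ ⊗ₖ P) *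
    ((1 : Matrix α α R) ⊗ₖ U)ᴴ
  map_add' σ τ := by
    simp [add_kronecker, submatrix_add, Matrix.mul_add, Matrix.add_mul]
  map_smul' r σ := by
    simp [smul_kronecker, submatrix_smul]

theorem downstreamMap_kronecker (U : Matrix δ (γ × β) R) (P : Matrix β β R)
    (N : Matrix α α R) (M : Matrix γ γ R) :
    downstreamMap U P (N ⊗ₖ M) = N ⊗ₖ (U * (M ⊗ₖ P) * Uᴴ) := by
  simp [downstreamMap, conjTranspose_kronecker, ← mul_kronecker_mul]

end DownstreamMap

theorem zeroProj_prod (α β : Type*) [Zero α] [Zero β] [DecidableEq α] [DecidableEq β] :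
    zeroProj (α × β) = zeroProj α ⊗ₖ zeroProj β := by
  ext ⟨a, b⟩ ⟨a', b'⟩
  simp [zeroProj, ← ite_and, Prod.ext_iff, and_and_and_comm, and_comm]

section FullState

variable {n₁ K n₂ : ℕ} (U₁ : Matrix (Reg n₁ × Reg K) (Reg n₁ × Reg K) ℂ)
  (U₂ : Matrix (Reg K × Reg n₂) (Reg K × Reg n₂) ℂ)

theorem fullState_eq_downstreamMap :
    fullState U₁ U₂ =
      downstreamMap U₂ (zeroProj (Reg n₂)) (U₁ * zeroProj (Reg n₁ × Reg K) * U₁ᴴ) := by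
  let e := Equiv.prodAssoc (Reg n₁) (Reg K) (Reg n₂)
  let V := U₁ ⊗ₖ (1 : Matrix (Reg n₂) (Reg n₂) ℂ)
  have initial : zeroProj (Reg n₁ × (Reg K × Reg n₂)) =
      reindex e e (zeroProj (Reg n₁ × Reg K) ⊗ₖ zeroProj (Reg n₂)) := by
    simp only [zeroProj_prod, e, kronecker_assoc]
  have upstream : reindex e e V * zeroProj (Reg n₁ × (Reg K × Reg n₂)) * (reindex e e V)ᴴ =
      reindex e e ((U₁ * zeroProj (Reg n₁ × Reg K) * U₁ᴴ) ⊗ₖ zeroProj (Reg n₂)) := by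
    simp [initial, V, conjTranspose_kronecker, submatrix_mul_equiv, ← mul_kronecker_mul]
  calc fullState U₁ U₂
      = (1 ⊗ₖ U₂) * (reindex e e V * zeroProj (Reg n₁ × (Reg K × Reg n₂)) * (reindex e e V)ᴴ) *
          (1 ⊗ₖ U₂)ᴴ := by
        simp only [fullState, Matrix.mul_assoc, e, V]
    _ = downstreamMap U₂ (zeroProj (Reg n₂)) (U₁ * zeroProj (Reg n₁ × Reg K) * U₁ᴴ) := by
        rw [upstream]
        rfl

theorem fullState_pauli_decomposition_general :
    fullState U₁ U₂ = ((2 : ℂ) ^ K)⁻¹ •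
      ∑ f : Fin K → Fin 4, (rho1 U₁ (pauliString f)) ⊗ₖ (rho2 U₂ (pauliString f)) := by
  let σ := U₁ * zeroProj (Reg n₁ × Reg K) * U₁ᴴ
  have expansion : ∑ f : Fin K → Fin 4, rho1 U₁ (pauliString f) ⊗ₖ pauliString f =
      (2 : ℂ) ^ K • σ :=
    sum_weightedPartialTrace_kronecker sum_pauliString_apply_smul_pauliString σ
  rw [eq_inv_smul_iff₀ (pow_ne_zero K two_ne_zero)]
  calc (2 : ℂ) ^ K • fullState U₁ U₂
      = downstreamMap U₂ (zeroProj (Reg n₂)) ((2 : ℂ) ^ K • σ) := by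
        rw [fullState_eq_downstreamMap, map_smul]
    _ = ∑ f : Fin K → Fin 4, downstreamMap U₂ (zeroProj (Reg n₂))
          (rho1 U₁ (pauliString f) ⊗ₖ pauliString f) := by
        rw [← expansion, map_sum]
    _ = ∑ f : Fin K → Fin 4, rho1 U₁ (pauliString f) ⊗ₖ rho2 U₂ (pauliString f) := by
        simp only [downstreamMap_kronecker, rho2]

end FullState

/-- Circuit-cutting decomposition of the full state over Pauli strings on the cut register:
`ρ = 2^{-K} ∑_f ρ₁(S_f) ⊗ ρ₂(S_f)`. -/
theorem fullState_pauli_decomposition {n₁ K n₂ : ℕ}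
    (U₁ : Matrix (Reg n₁ × Reg K) (Reg n₁ × Reg K) ℂ)
    (U₂ : Matrix (Reg K × Reg n₂) (Reg K × Reg n₂) ℂ)
    (hU₁ : U₁ᴴ * U₁ = 1) (hU₁' : U₁ * U₁ᴴ = 1)
    (hU₂ : U₂ᴴ * U₂ = 1) (hU₂' : U₂ * U₂ᴴ = 1) :
    fullState U₁ U₂ = ((2 : ℂ) ^ K)⁻¹ •
      ∑ f : Fin K → Fin 4, (rho1 U₁ (pauliString f)) ⊗ₖ (rho2 U₂ (pauliString f)) :=
  fullState_pauli_decomposition_general U₁ U₂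
end

section
/- With the circuit-cutting setup and Pauli eigendecomposition data below, for any complex matrix O₁ indexed by A and any complex matrix O₂ indexed by C × B, the expectation of the product observable reconstructs from the fragments: tr((O₁ ⊗ O₂) · ρ) = 2^{-K} · Σ_{f : Fin K → Fin 4} Σ_{r, s : Fin K → ({+1,-1})} w_f(r) · w_f(s) · tr(O₁ · ρ₁(P_f(r))) · tr(O₂ · ρ₂(P_f(s))). -/
open Matrix BigOperators Kronecker

/-- The weight `w_f(r) = ∏_k λ_{f k}(r k)` attached to a string of eigenvalue labels
`r : Fin K → ℤˣ` (the two-element type `{+1, -1}`). -/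
def cutWeight {K : ℕ} (lam : Fin 4 → ℤˣ → ℝ) (f : Fin K → Fin 4) (r : Fin K → ℤˣ) : ℝ :=
  ∏ k, lam (f k) (r k)

/-- The Kronecker product `P_f(r)` of the rank-one eigenprojectors `v_{f k}(r k) v_{f k}(r k)ᴴ`. -/
noncomputable def pauliProj {K : ℕ} (v : Fin 4 → ℤˣ → Fin 2 → ℂ)
    (f : Fin K → Fin 4) (r : Fin K → ℤˣ) : Matrix (Reg K) (Reg K) ℂ :=
  Matrix.of fun c c' => ∏ k, v (f k) (r k) (c k) * star (v (f k) (r k) (c' k))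

/-!
Write `E b b'` for the matrix units on the cut register. Since `|0⟩⟨0|` has rank one, the full
state is `∑ b b', ρ₁ (E b b') ⊗ ρ₂ (E b' b)`: cutting the wires inserts `∑ b b', E b b' ⊗ E b' b`,
which is the swap operator on two copies of the register. The Pauli strings resolve the same
operator, `∑ f, S_f ⊗ S_f = 2 ^ K • SWAP`, so by bilinearity
`ρ = 2⁻ᴷ • ∑ f, ρ₁ (S_f) ⊗ ρ₂ (S_f)`. It remains to pair with `O₁ ⊗ O₂` and to expand both copies of
each `S_f` in eigenprojectors.
-/

section MatrixUnits

variable {R l m n p M : Type*} [Semiring R] [Fintype m] [DecidableEq m] [Fintype n]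
  [DecidableEq n]

theorem mul_single_one_mul_apply (W : Matrix l m R) (V : Matrix n p R) (i : m) (j : n) (x : l)
    (y : p) : (W * single i j (1 : R) * V) x y = W x i * V j y := by
  rw [single_eq_single_vecMulVec_single, mul_vecMulVec, vecMulVec_mul, mulVec_single_one,
    single_one_vecMul]
  rfl

theorem linearMap_apply_eq_sum_single [AddCommMonoid M] [Module R M]
    (φ : Matrix m n R →ₗ[R] M) (A : Matrix m n R) :
    φ A = ∑ i, ∑ j, A i j • φ (single i j 1) := by
  conv_lhs => rw [matrix_eq_sum_single A]
  simp only [map_sum, ← map_smul, smul_single, smul_eq_mul, mul_one]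

end MatrixUnits

section SwapResolution

variable {R ι n κ M : Type*} [CommSemiring R] [Fintype ι] [DecidableEq n]

theorem bilinear_apply_eq_sum_single {l m p : Type*} [Fintype l] [DecidableEq l] [Fintype m]
    [DecidableEq m] [Fintype n] [Fintype p] [DecidableEq p] [AddCommMonoid M] [Module R M]
    (β : Matrix l m R →ₗ[R] Matrix n p R →ₗ[R] M) (A : Matrix l m R) (B : Matrix n p R) :
    β A B = ∑ a, ∑ b, ∑ c, ∑ d, (A a b * B c d) • β (single a b 1) (single c d 1) := by
  rw [linearMap_apply_eq_sum_single β A]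
  simp only [LinearMap.sum_apply, LinearMap.smul_apply,
    linearMap_apply_eq_sum_single (β (single _ _ 1)) B, Finset.smul_sum, smul_smul]

/-- The family `σ` resolves the swap operator on two copies of `n → R`, up to the scalar `t`:
`∑ j, σ j ⊗ σ j = t • SWAP`. The identity is stated entrywise, so that tensor powers of `σ` reduce
to products of entries. -/
def IsSwapResolution (σ : ι → Matrix n n R) (t : R) : Prop :=
  ∀ a b c d, ∑ j, σ j a b * σ j c d = if a = d ∧ b = c then t else 0

namespace IsSwapResolution

variable {σ : ι → Matrix n n R} {t : R}

theorem tensorPower [Fintype κ] [DecidableEq κ] (hσ : IsSwapResolution σ t) :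
    IsSwapResolution
      (fun f : κ → ι => Matrix.of fun b b' : κ → n => ∏ k, σ (f k) (b k) (b' k))
      (t ^ Fintype.card κ) := by
  intro a b c d
  calc ∑ f : κ → ι, (∏ k, σ (f k) (a k) (b k)) * ∏ k, σ (f k) (c k) (d k)
      = ∏ k, ∑ j, σ j (a k) (b k) * σ j (c k) (d k) := by
        simp only [← Finset.prod_mul_distrib, Fintype.prod_sum]
    _ = ∏ k, if a k = d k ∧ b k = c k then t else 0 :=
        Finset.prod_congr rfl fun k _ => hσ (a k) (b k) (c k) (d k)
    _ = if a = d ∧ b = c then t ^ Fintype.card κ else 0 := by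
        simp only [Fintype.prod_ite_zero, Finset.prod_const, Finset.card_univ, forall_and,
          funext_iff]

theorem sum_bilinear_self [Fintype n] [AddCommMonoid M] [Module R M]
    (hσ : IsSwapResolution σ t) (β : Matrix n n R →ₗ[R] Matrix n n R →ₗ[R] M) :
    ∑ j, β (σ j) (σ j) = t • ∑ b, ∑ b', β (single b b' 1) (single b' b 1) := by
  calc ∑ j, β (σ j) (σ j)
      = ∑ a, ∑ b, ∑ c, ∑ d, (∑ j, σ j a b * σ j c d) • β (single a b 1) (single c d 1) := by
        simp only [bilinear_apply_eq_sum_single β (σ _), Finset.sum_smul,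
          Finset.sum_comm (s := (Finset.univ : Finset ι))]
    _ = t • ∑ b, ∑ b', β (single b b' 1) (single b' b 1) := by
        simp [hσ _ _ _ _, ite_and, ite_smul, Finset.smul_sum]

end IsSwapResolution

end SwapResolution

section PauliStrings

variable {K : ℕ}

theorem isSwapResolution_pauli : IsSwapResolution pauli 2 := by
  intro a b c d
  rw [Fin.sum_univ_four]
  fin_cases a <;> fin_cases b <;> fin_cases c <;> fin_cases d <;> simp [pauli] <;> norm_num

theorem isSwapResolution_pauliString :
    IsSwapResolution (pauliString (K := K)) ((2 : ℂ) ^ K) := by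
  have tensor := isSwapResolution_pauli.tensorPower (κ := Fin K)
  rwa [Fintype.card_fin] at tensor

theorem pauliString_eq_sum_cutWeight_smul_pauliProj
    {v : Fin 4 → ℤˣ → Fin 2 → ℂ} {lam : Fin 4 → ℤˣ → ℝ}
    (hdecomp : ∀ j, pauli j =
      ∑ r : ℤˣ, (lam j r : ℂ) • Matrix.of (fun i i' => v j r i * star (v j r i')))
    (f : Fin K → Fin 4) :
    pauliString f = ∑ r, (cutWeight lam f r : ℂ) • pauliProj v f r := by
  ext c c'
  calc pauliString f c c'
      = ∏ k, ∑ r, (lam (f k) r : ℂ) * (v (f k) r (c k) * star (v (f k) r (c' k))) := by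
        simp only [pauliString, hdecomp, Matrix.of_apply, Matrix.sum_apply, Matrix.smul_apply,
          smul_eq_mul]
    _ = (∑ r, (cutWeight lam f r : ℂ) • pauliProj v f r) c c' := by
        simp only [Fintype.prod_sum, Finset.prod_mul_distrib, cutWeight, pauliProj,
          Complex.ofReal_prod, Matrix.sum_apply, Matrix.smul_apply, Matrix.of_apply, smul_eq_mul]

end PauliStrings

section MatrixProducts

variable {R l m p : Type*} [CommSemiring R] [Fintype l]

theorem one_kronecker_mul_reindex_kronecker_one_apply {l' m' q : Type*} [DecidableEq l]
    [Fintype m] [Fintype p] [DecidableEq p] (U₁ : Matrix (l × m) (l' × m') R)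
    (U₂ : Matrix q (m × p) R) (a : l) (x : q) (a' : l') (c' : m') (b' : p) :
    (((1 : Matrix l l R) ⊗ₖ U₂) *
        reindex (Equiv.prodAssoc l m p) (Equiv.prodAssoc l' m' p) (U₁ ⊗ₖ (1 : Matrix p p R)))
        (a, x) (a', c', b') =
      ∑ c, U₁ (a, c) (a', c') * U₂ x (c, b') := by
  simp [Matrix.mul_apply, Fintype.sum_prod_type, one_apply, mul_comm]

theorem trace_mul_map_sum_smul {ι M : Type*} [Fintype ι] [AddCommMonoid M] [Module R M]
    (ρ : M →ₗ[R] Matrix l l R) (O : Matrix l l R) (w : ι → R) (P : ι → M) :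
    trace (O * ρ (∑ i, w i • P i)) = ∑ i, w i * trace (O * ρ (P i)) := by
  simp only [map_sum, map_smul, Matrix.mul_sum, Matrix.mul_smul, trace_sum, trace_smul,
    smul_eq_mul]

end MatrixProducts

section Fragments

variable {n₁ K n₂ : ℕ} (U₁ : Matrix (Reg n₁ × Reg K) (Reg n₁ × Reg K) ℂ)
  (U₂ : Matrix (Reg K × Reg n₂) (Reg K × Reg n₂) ℂ)

/-- The upstream fragment map `M ↦ ρ₁(M)` bundled as a linear map, so that expansions of the cut
operator `M` pass through it. -/
noncomputable def rho1LinearMap :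
    Matrix (Reg K) (Reg K) ℂ →ₗ[ℂ] Matrix (Reg n₁) (Reg n₁) ℂ where
  toFun := rho1 U₁
  map_add' M N := by
    ext
    simp only [rho1, Matrix.of_apply, Matrix.add_apply, add_mul, Finset.sum_add_distrib]
  map_smul' z M := by
    ext
    simp only [rho1, Matrix.of_apply, Matrix.smul_apply, smul_eq_mul, RingHom.id_apply, mul_assoc,
      Finset.mul_sum]

/-- The downstream fragment map `M ↦ ρ₂(M)` bundled as a linear map, so that expansions of the cut
operator `M` pass through it. -/
noncomputable def rho2LinearMap :
    Matrix (Reg K) (Reg K) ℂ →ₗ[ℂ] Matrix (Reg K × Reg n₂) (Reg K × Reg n₂) ℂ where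
  toFun := rho2 U₂
  map_add' M N := by simp only [rho2, add_kronecker, Matrix.mul_add, Matrix.add_mul]
  map_smul' z M := by
    simp only [rho2, smul_kronecker, Matrix.mul_smul, Matrix.smul_mul, RingHom.id_apply]

theorem zeroProj_eq_single (α : Type*) [Zero α] [DecidableEq α] :
    zeroProj α = single 0 0 1 := by
  ext a a'
  simp only [zeroProj, Matrix.of_apply, single_apply, eq_comm]

theorem rho1_single_apply (b b' : Reg K) (a a' : Reg n₁) :
    rho1 U₁ (single b b' 1) a a' = U₁ (a, b') 0 * star (U₁ (a', b) 0) := by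
  simp [rho1, zeroProj_eq_single, mul_single_one_mul_apply, single_apply, ite_and]

theorem rho2_single_apply (b b' : Reg K) (x x' : Reg K × Reg n₂) :
    rho2 U₂ (single b b' 1) x x' = U₂ x (b, 0) * star (U₂ x' (b', 0)) := by
  rw [rho2, zeroProj_eq_single, single_kronecker_single, mul_one, mul_single_one_mul_apply,
    conjTranspose_apply]

theorem fullState_apply (a a' : Reg n₁) (x x' : Reg K × Reg n₂) :
    fullState U₁ U₂ (a, x) (a', x') =
      (∑ c, U₁ (a, c) 0 * U₂ x (c, 0)) * star (∑ c, U₁ (a', c) 0 * U₂ x' (c, 0)) := by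
  rw [fullState, Matrix.mul_assoc _ _ᴴ, ← conjTranspose_mul, zeroProj_eq_single,
    mul_single_one_mul_apply, conjTranspose_apply]
  exact congrArg₂ (fun z w => z * star w)
    (one_kronecker_mul_reindex_kronecker_one_apply U₁ U₂ a x 0 0 0)
    (one_kronecker_mul_reindex_kronecker_one_apply U₁ U₂ a' x' 0 0 0)

theorem fullState_eq_sum_single :
    fullState U₁ U₂ =
      ∑ b, ∑ b', rho1 U₁ (single b b' 1) ⊗ₖ rho2 U₂ (single b' b 1) := by
  ext ⟨a, x⟩ ⟨a', x'⟩
  simp only [fullState_apply, Matrix.sum_apply, kronecker_apply, rho1_single_apply,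
    rho2_single_apply, star_sum, star_mul', Finset.sum_mul_sum]
  rw [Finset.sum_comm]
  exact Finset.sum_congr rfl fun _ _ => Finset.sum_congr rfl fun _ _ => mul_mul_mul_comm ..

theorem fullState_eq_smul_sum_pauliString :
    fullState U₁ U₂ =
      ((2 : ℂ) ^ K)⁻¹ • ∑ f, rho1 U₁ (pauliString f) ⊗ₖ rho2 U₂ (pauliString f) := by
  have swap := isSwapResolution_pauliString.sum_bilinear_self
    (LinearMap.compl₁₂ kroneckerBilinear (rho1LinearMap U₁) (rho2LinearMap U₂))
  rw [fullState_eq_sum_single, eq_inv_smul_iff₀ (pow_ne_zero K two_ne_zero)]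
  exact swap.symm

theorem trace_kronecker_mul_fullState (O₁ : Matrix (Reg n₁) (Reg n₁) ℂ)
    (O₂ : Matrix (Reg K × Reg n₂) (Reg K × Reg n₂) ℂ) :
    trace ((O₁ ⊗ₖ O₂) * fullState U₁ U₂) =
      ((2 : ℂ) ^ K)⁻¹ * ∑ f, trace (O₁ * rho1 U₁ (pauliString f)) *
        trace (O₂ * rho2 U₂ (pauliString f)) := by
  simp only [fullState_eq_smul_sum_pauliString, Matrix.mul_smul, Matrix.mul_sum,
    ← mul_kronecker_mul, trace_smul, trace_sum, trace_kronecker, smul_eq_mul]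

end Fragments

theorem cut_reconstruction_general {n₁ K n₂ : ℕ}
    (U₁ : Matrix (Reg n₁ × Reg K) (Reg n₁ × Reg K) ℂ)
    (U₂ : Matrix (Reg K × Reg n₂) (Reg K × Reg n₂) ℂ)
    (v : Fin 4 → ℤˣ → Fin 2 → ℂ) (lam : Fin 4 → ℤˣ → ℝ)
    (hdecomp : ∀ j, pauli j =
      ∑ r : ℤˣ, (lam j r : ℂ) • Matrix.of (fun i i' => v j r i * star (v j r i')))
    (O₁ : Matrix (Reg n₁) (Reg n₁) ℂ)
    (O₂ : Matrix (Reg K × Reg n₂) (Reg K × Reg n₂) ℂ) :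
    Matrix.trace ((O₁ ⊗ₖ O₂) * fullState U₁ U₂) =
      ((2 : ℂ) ^ K)⁻¹ *
        ∑ f : Fin K → Fin 4, ∑ r : Fin K → ℤˣ, ∑ s : Fin K → ℤˣ,
          ((cutWeight lam f r * cutWeight lam f s : ℝ) : ℂ) *
            Matrix.trace (O₁ * rho1 U₁ (pauliProj v f r)) *
            Matrix.trace (O₂ * rho2 U₂ (pauliProj v f s)) := by
  have trace₁ (f : Fin K → Fin 4) : trace (O₁ * rho1 U₁ (pauliString f)) =
      ∑ r, (cutWeight lam f r : ℂ) * trace (O₁ * rho1 U₁ (pauliProj v f r)) := by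
    rw [pauliString_eq_sum_cutWeight_smul_pauliProj hdecomp]
    exact trace_mul_map_sum_smul (rho1LinearMap U₁) O₁ _ _
  have trace₂ (f : Fin K → Fin 4) : trace (O₂ * rho2 U₂ (pauliString f)) =
      ∑ s, (cutWeight lam f s : ℂ) * trace (O₂ * rho2 U₂ (pauliProj v f s)) := by
    rw [pauliString_eq_sum_cutWeight_smul_pauliProj hdecomp]
    exact trace_mul_map_sum_smul (rho2LinearMap U₂) O₂ _ _
  simp only [trace_kronecker_mul_fullState, trace₁, trace₂, Finset.sum_mul_sum,
    Complex.ofReal_mul, mul_assoc, mul_left_comm]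

/-- Bipartite circuit-cutting reconstruction of an expectation value:
`tr((O₁ ⊗ O₂) ρ) = 2^{-K} ∑_{f, r, s} w_f(r) w_f(s) tr(O₁ ρ₁(P_f(r))) tr(O₂ ρ₂(P_f(s)))`. -/
theorem cut_reconstruction {n₁ K n₂ : ℕ}
    (U₁ : Matrix (Reg n₁ × Reg K) (Reg n₁ × Reg K) ℂ)
    (U₂ : Matrix (Reg K × Reg n₂) (Reg K × Reg n₂) ℂ)
    (hU₁ : U₁ᴴ * U₁ = 1) (hU₁' : U₁ * U₁ᴴ = 1)
    (hU₂ : U₂ᴴ * U₂ = 1) (hU₂' : U₂ * U₂ᴴ = 1)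
    (v : Fin 4 → ℤˣ → Fin 2 → ℂ) (lam : Fin 4 → ℤˣ → ℝ)
    (hunit : ∀ j r, ∑ i, v j r i * star (v j r i) = 1)
    (horth : ∀ j, ∑ i, v j 1 i * star (v j (-1) i) = 0)
    (hdecomp : ∀ j, pauli j =
      ∑ r : ℤˣ, (lam j r : ℂ) • Matrix.of (fun i i' => v j r i * star (v j r i')))
    (O₁ : Matrix (Reg n₁) (Reg n₁) ℂ)
    (O₂ : Matrix (Reg K × Reg n₂) (Reg K × Reg n₂) ℂ) :
    Matrix.trace ((O₁ ⊗ₖ O₂) * fullState U₁ U₂) =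
      ((2 : ℂ) ^ K)⁻¹ *
        ∑ f : Fin K → Fin 4, ∑ r : Fin K → ℤˣ, ∑ s : Fin K → ℤˣ,
          ((cutWeight lam f r * cutWeight lam f s : ℝ) : ℂ) *
            Matrix.trace (O₁ * rho1 U₁ (pauliProj v f r)) *
            Matrix.trace (O₂ * rho2 U₂ (pauliProj v f s)) :=
  cut_reconstruction_general U₁ U₂ v lam hdecomp O₁ O₂
end

section
/- With the circuit-cutting setup and Pauli eigendecomposition data below, for any f : Fin K → Fin 4 and any complex matrix O₁ indexed by A, the weighted sum of upstream fragment expectations equals the expectation of a single enlarged observable on the upstream fragment: Σ_{r : Fin K → {+1,-1}} w_f(r) · tr(O₁ · ρ₁(P_f(r))) = tr((O₁ ⊗ S_f) · U₁|0⟩⟨0|U₁ᴴ). -/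
open Matrix BigOperators Kronecker

/-!
Expanding each factor of `S_f` in its eigenbasis and distributing the Kronecker product over the
sums gives `S_f = ∑_r w_f(r) P_f(r)`. Since `ρ₁(M)` is the partial trace over `C` of
`(1 ⊗ M) U₁|0⟩⟨0|U₁ᴴ`, the expectation `tr(O₁ ρ₁(M))` equals `tr((O₁ ⊗ M) U₁|0⟩⟨0|U₁ᴴ)`, which is
linear in `M`.
-/

section KroneckerPi

variable {ι R : Type*} [Fintype ι] {m n κ : ι → Type*}

/-- The Kronecker product of a finite family of matrices, indexed by dependent functions; it puts
Pauli strings and products of eigenprojectors under one notion. -/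
def kroneckerPi [CommMonoid R] (A : ∀ i, Matrix (m i) (n i) R) :
    Matrix (∀ i, m i) (∀ i, n i) R :=
  of fun b b' => ∏ i, A i (b i) (b' i)

theorem kroneckerPi_smul [CommMonoid R] (c : ι → R) (A : ∀ i, Matrix (m i) (n i) R) :
    kroneckerPi (fun i => c i • A i) = (∏ i, c i) • kroneckerPi A :=
  Matrix.ext fun _ _ => Finset.prod_mul_distrib

theorem kroneckerPi_sum [DecidableEq ι] [∀ i, Fintype (κ i)] [CommSemiring R]
    (A : ∀ i, κ i → Matrix (m i) (n i) R) :
    kroneckerPi (fun i => ∑ r, A i r) = ∑ r : ∀ i, κ i, kroneckerPi fun i => A i (r i) := by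
  ext b b'
  simp only [kroneckerPi, of_apply, Matrix.sum_apply, Fintype.prod_sum]

end KroneckerPi

theorem kronecker_sum_right {ι l m n p R : Type*} [NonUnitalNonAssocSemiring R] (s : Finset ι)
    (A : Matrix l m R) (B : ι → Matrix n p R) : A ⊗ₖ (∑ i ∈ s, B i) = ∑ i ∈ s, A ⊗ₖ B i := by
  ext
  simp only [kroneckerMap_apply, Matrix.sum_apply, Finset.mul_sum]

theorem one_kronecker_mul_apply {m n p q R : Type*} [Fintype m] [DecidableEq m] [Fintype q]
    [NonAssocSemiring R] (M : Matrix p q R) (ρ : Matrix (m × q) n R) (a : m) (c : p)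
    (j : n) :
    ((1 : Matrix m m R) ⊗ₖ M * ρ) (a, c) j = ∑ c', M c c' * ρ (a, c') j := by
  simp [Matrix.mul_apply, Fintype.sum_prod_type, Matrix.one_apply, ite_mul]

section PartialTrace

variable {m n p q R : Type*} [Fintype p]

/-- The partial trace over the second tensor factor, the operation that discards the cut register.
The first factor may be rectangular. -/
def partialTraceSnd [AddCommMonoid R] (ρ : Matrix (m × p) (n × p) R) : Matrix m n R :=
  of fun a a' => ∑ c, ρ (a, c) (a', c)

variable [Fintype m] [Fintype n]

theorem trace_mul_partialTraceSnd [DecidableEq p] [NonAssocSemiring R]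
    (O : Matrix m n R) (ρ : Matrix (n × p) (m × p) R) :
    trace (O * partialTraceSnd ρ) = trace (O ⊗ₖ (1 : Matrix p p R) * ρ) := by
  simp only [trace, diag_apply, Matrix.mul_apply, partialTraceSnd, of_apply,
    Fintype.sum_prod_type, kronecker_apply, Matrix.one_apply, mul_ite, mul_one, mul_zero, ite_mul,
    zero_mul, Finset.sum_ite_eq, Finset.mem_univ, if_true, Finset.mul_sum]
  exact Finset.sum_congr rfl fun _ _ => Finset.sum_comm

theorem trace_mul_partialTraceSnd_one_kronecker_mul [DecidableEq n] [Fintype q] [CommSemiring R]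
    (O : Matrix m n R) (M : Matrix p q R) (ρ : Matrix (n × q) (m × p) R) :
    trace (O * partialTraceSnd ((1 : Matrix n n R) ⊗ₖ M * ρ)) = trace (O ⊗ₖ M * ρ) := by
  classical
  rw [trace_mul_partialTraceSnd, ← Matrix.mul_assoc, ← mul_kronecker_mul, Matrix.mul_one,
    Matrix.one_mul]

end PartialTrace

theorem rho1_eq_partialTraceSnd {n₁ K : ℕ} (U₁ : Matrix (Reg n₁ × Reg K) (Reg n₁ × Reg K) ℂ)
    (M : Matrix (Reg K) (Reg K) ℂ) :
    rho1 U₁ M = partialTraceSnd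
      ((1 : Matrix (Reg n₁) (Reg n₁) ℂ) ⊗ₖ M * (U₁ * zeroProj (Reg n₁ × Reg K) * U₁ᴴ)) := by
  ext a a'
  simp only [rho1, partialTraceSnd, of_apply, one_kronecker_mul_apply]
  exact Finset.sum_comm

theorem upstream_collapse_general {ι m n R : Type*} {p q κ : ι → Type*} [Fintype ι]
    [DecidableEq ι] [Fintype m] [Fintype n] [DecidableEq n] [∀ i, Fintype (p i)]
    [∀ i, Fintype (q i)] [∀ i, Fintype (κ i)] [CommSemiring R]
    (S : ∀ i, Matrix (p i) (q i) R) (c : ∀ i, κ i → R) (P : ∀ i, κ i → Matrix (p i) (q i) R)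
    (hS : ∀ i, S i = ∑ r, c i r • P i r)
    (O : Matrix m n R) (ρ : Matrix (n × (∀ i, q i)) (m × (∀ i, p i)) R) :
    ∑ r : ∀ i, κ i, (∏ i, c i (r i)) * trace (O * partialTraceSnd
        ((1 : Matrix n n R) ⊗ₖ kroneckerPi (fun i => P i (r i)) * ρ)) =
      trace (O ⊗ₖ kroneckerPi S * ρ) := by
  have hkron : kroneckerPi S =
      ∑ r : ∀ i, κ i, (∏ i, c i (r i)) • kroneckerPi fun i => P i (r i) := by
    simp only [funext hS, kroneckerPi_sum, kroneckerPi_smul]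
  simp only [trace_mul_partialTraceSnd_one_kronecker_mul, hkron, kronecker_sum_right,
    kronecker_smul, Matrix.sum_mul, Matrix.smul_mul, trace_sum, trace_smul, smul_eq_mul]

/-- The weighted sum of upstream fragment expectations collapses to the expectation of the
single enlarged observable `O₁ ⊗ S_f` in the upstream state `U₁|0⟩⟨0|U₁ᴴ`:
`∑_r w_f(r) tr(O₁ ρ₁(P_f(r))) = tr((O₁ ⊗ S_f) U₁|0⟩⟨0|U₁ᴴ)`. -/
theorem upstream_collapse {n₁ K : ℕ}
    (U₁ : Matrix (Reg n₁ × Reg K) (Reg n₁ × Reg K) ℂ)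
    (hU₁ : U₁ᴴ * U₁ = 1) (hU₁' : U₁ * U₁ᴴ = 1)
    (v : Fin 4 → ℤˣ → Fin 2 → ℂ) (lam : Fin 4 → ℤˣ → ℝ)
    (hunit : ∀ j r, ∑ i, v j r i * star (v j r i) = 1)
    (horth : ∀ j, ∑ i, v j 1 i * star (v j (-1) i) = 0)
    (hdecomp : ∀ j, pauli j =
      ∑ r : ℤˣ, (lam j r : ℂ) • Matrix.of (fun i i' => v j r i * star (v j r i')))
    (f : Fin K → Fin 4) (O₁ : Matrix (Reg n₁) (Reg n₁) ℂ) :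
    ∑ r : Fin K → ℤˣ,
        ((cutWeight lam f r : ℝ) : ℂ) * Matrix.trace (O₁ * rho1 U₁ (pauliProj v f r)) =
      Matrix.trace ((O₁ ⊗ₖ pauliString f) *
        (U₁ * zeroProj (Reg n₁ × Reg K) * U₁ᴴ)) := by
  simp only [cutWeight, Complex.ofReal_prod, rho1_eq_partialTraceSnd]
  exact upstream_collapse_general (fun k => pauli (f k)) _ _ (fun k => hdecomp (f k)) O₁ _
end
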